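/- Let U = X_{i,j} and V = X_{k,ℓ} be distinct indecomposable representations of Q_ε. Then (U,V) is an exceptional pair and (V,U) is not an exceptional pair if and only if the chords {i,j} and {k,ℓ} share an endpoint and {i,j} is clockwise from {k,ℓ}. -/

import Mathlib

namespace ESPaper

/-- Source of arrow `a m` (between vertices `m` and `m+1`): `m` if `ε m = +` (true). -/
def asrc (ε : ℕ → Bool) (m : ℕ) : ℕ := if ε m then m else m + 1

/-- Target of arrow `a m`. -/
def atgt (ε : ℕ → Bool) (m : ℕ) : ℕ := if ε m then m + 1 else m

/-- A representation of the type `A_n` quiver `Q_ε`: finite dimensional vector spaces at the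
vertices `1, …, n` (the spaces at the remaining indices are required to be trivial, so that
the maps attached to indices outside `1, …, n-1` carry no information) together with a
linear map along each arrow `a m : asrc ε m → atgt ε m`, `1 ≤ m ≤ n-1`. -/
structure Rep (K : Type) [Field K] (n : ℕ) (ε : ℕ → Bool) : Type 1 where
  V : ℕ → Type
  [instAdd : ∀ m, AddCommGroup (V m)]
  [instMod : ∀ m, Module K (V m)]
  [instFin : ∀ m, FiniteDimensional K (V m)]
  triv : ∀ m, m = 0 ∨ n < m → Subsingleton (V m)
  φ : ∀ m, V (asrc ε m) →ₗ[K] V (atgt ε m)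

attribute [instance] Rep.instAdd Rep.instMod Rep.instFin

/-- A morphism of representations of `Q_ε`. -/
structure RepHom {K : Type} [Field K] {n : ℕ} {ε : ℕ → Bool} (A B : Rep K n ε) where
  app : ∀ m, A.V m →ₗ[K] B.V m
  comm : ∀ m, (app (atgt ε m)).comp (A.φ m) = (B.φ m).comp (app (asrc ε m))

/-- Vertex space of the indecomposable `X_{i,j}` (for `0 ≤ i < j ≤ n`): `K` at the
vertices `i+1, …, j` and `0` elsewhere. -/
def XV (K : Type) [Field K] (n i j m : ℕ) : Submodule K K :=
  if i + 1 ≤ m ∧ m ≤ j ∧ m ≤ n then ⊤ else ⊥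

/-- Arrow map of the indecomposable `X_{i,j}`: the identity whenever both endpoints of the
arrow lie in the support, and zero otherwise. -/
def Xφ (K : Type) [Field K] (n : ℕ) (ε : ℕ → Bool) (i j m : ℕ) :
    XV K n i j (asrc ε m) →ₗ[K] XV K n i j (atgt ε m) :=
  if h : i + 1 ≤ atgt ε m ∧ atgt ε m ≤ j ∧ atgt ε m ≤ n then
    LinearMap.codRestrict _ (XV K n i j (asrc ε m)).subtype
      (fun x => by simp [XV, h.1, h.2.1, h.2.2])
  else 0

/-- The indecomposable representation `X_{i,j}` of `Q_ε`. -/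
def Xrep (K : Type) [Field K] (n : ℕ) (ε : ℕ → Bool) (i j : ℕ) : Rep K n ε where
  V m := XV K n i j m
  instAdd _ := inferInstance
  instMod _ := inferInstance
  instFin _ := inferInstance
  triv m hm := by
    have hneg : ¬ (i + 1 ≤ m ∧ m ≤ j ∧ m ≤ n) := by omega
    have hbot : XV K n i j m = ⊥ := by unfold XV; rw [if_neg hneg]
    show Subsingleton (XV K n i j m)
    rw [hbot]
    infer_instance
  φ m := Xφ K n ε i j m

variable {K : Type} [Field K]

/-- `Hom(A, B) = 0`. -/
def homZero {n : ℕ} {ε : ℕ → Bool} (A B : Rep K n ε) : Prop :=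
  ∀ θ : RepHom A B, ∀ m, θ.app m = 0

/-- `Hom(A, B) ≠ 0`. -/
def homNonzero {n : ℕ} {ε : ℕ → Bool} (A B : Rep K n ε) : Prop :=
  ∃ θ : RepHom A B, ∃ m, θ.app m ≠ 0

/-- `0 → B → E → A → 0` is a short exact sequence. -/
def IsSES {n : ℕ} {ε : ℕ → Bool} {B E A : Rep K n ε}
    (f : RepHom B E) (g : RepHom E A) : Prop :=
  (∀ m, Function.Injective (f.app m)) ∧ (∀ m, Function.Surjective (g.app m)) ∧
    (∀ m, LinearMap.range (f.app m) = LinearMap.ker (g.app m))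

/-- The short exact sequence `0 → B → E → A → 0` splits. -/
def Splits {n : ℕ} {ε : ℕ → Bool} {E A : Rep K n ε} (g : RepHom E A) : Prop :=
  ∃ s : RepHom A E, ∀ m, (g.app m).comp (s.app m) = LinearMap.id

/-- `Ext¹(A, B) ≠ 0`: there is a nonsplit short exact sequence `0 → B → E → A → 0`. -/
def extNonzero {n : ℕ} {ε : ℕ → Bool} (A B : Rep K n ε) : Prop :=
  ∃ (E : Rep K n ε) (f : RepHom B E) (g : RepHom E A), IsSES f g ∧ ¬ Splits g

/-- `Ext¹(A, B) = 0`. -/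
def extZero {n : ℕ} {ε : ℕ → Bool} (A B : Rep K n ε) : Prop := ¬ extNonzero A B

/-- `(U, V)` is an exceptional pair: `Hom(V,U) = 0` and `Ext¹(V,U) = 0`. -/
def ExcPair {n : ℕ} {ε : ℕ → Bool} (U V : Rep K n ε) : Prop := homZero V U ∧ extZero V U


/-- The chords `c = {c.1, c.2}` and `d = {d.1, d.2}` (with `c.1 < c.2`, `d.1 < d.2`) cross. -/
def Crosses (ε : ℕ → Bool) (c d : ℕ × ℕ) : Prop :=
  (c.1 < d.1 ∧ d.1 < c.2 ∧ c.2 < d.2 ∧ ε d.1 = ε c.2) ∨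
  (d.1 < c.1 ∧ c.1 < d.2 ∧ d.2 < c.2 ∧ ε c.1 = ε d.2) ∨
  (c.1 < d.1 ∧ d.1 < d.2 ∧ d.2 < c.2 ∧ ε d.1 ≠ ε d.2) ∨
  (d.1 < c.1 ∧ c.1 < c.2 ∧ c.2 < d.2 ∧ ε c.1 ≠ ε c.2)

/-- The chords `c` and `d` share an endpoint. -/
def SharesEndpoint (c d : ℕ × ℕ) : Prop :=
  c.1 = d.1 ∨ c.1 = d.2 ∨ c.2 = d.1 ∨ c.2 = d.2

/-- The chord `c` is clockwise from the chord `d` (chords written with `c.1 < c.2`, `d.1 < d.2`). -/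
def Cw (ε : ℕ → Bool) (c d : ℕ × ℕ) : Prop :=
  (c.2 = d.1 ∧ ε c.2 = true) ∨
  (d.2 = c.1 ∧ ε c.1 = false) ∨
  (c.1 = d.1 ∧ ((c.2 < d.2 ∧ ε c.2 = false) ∨ (d.2 < c.2 ∧ ε d.2 = true))) ∨
  (c.2 = d.2 ∧ ((c.1 < d.1 ∧ ε d.1 = false) ∨ (d.1 < c.1 ∧ ε c.1 = true)))

/-- The graph on `{0,…,n} ⊆ ℕ` determined by a finite set of chords. -/
def chordGraph (d : Finset (ℕ × ℕ)) : SimpleGraph ℕ :=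
  SimpleGraph.fromEdgeSet {e : Sym2 ℕ | ∃ c ∈ d, e = s(c.1, c.2)}

/-- The graph on `{0,…,n} ⊆ ℕ` determined by a family of chords. -/
def chordGraphF {k : ℕ} (c : Fin k → ℕ × ℕ) : SimpleGraph ℕ :=
  SimpleGraph.fromEdgeSet {e : Sym2 ℕ | ∃ a : Fin k, e = s((c a).1, (c a).2)}

/-- `d` is a strand diagram on `S_{n,ε}`: valid pairwise-noncrossing chords forming a forest. -/
def IsDiagram (n : ℕ) (ε : ℕ → Bool) (d : Finset (ℕ × ℕ)) : Prop :=
  (∀ c ∈ d, c.1 < c.2 ∧ c.2 ≤ n) ∧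
  (∀ c ∈ d, ∀ c' ∈ d, ¬ Crosses ε c c') ∧
  (chordGraph d).IsAcyclic

/-- The family `c` is a strand diagram (pairwise-noncrossing chords forming a forest). -/
def IsDiagramF {k : ℕ} (ε : ℕ → Bool) (c : Fin k → ℕ × ℕ) : Prop :=
  (∀ a b : Fin k, ¬ Crosses ε (c a) (c b)) ∧ (chordGraphF c).IsAcyclic

/-- The partial order of the poset `P_d`: `x ≤ y` iff there is a chain of chords of `d`
from `x` to `y` in which each chord shares an endpoint with, and is clockwise from,
the previous one. -/
def leD (ε : ℕ → Bool) (d : Finset (ℕ × ℕ)) : ℕ × ℕ → ℕ × ℕ → Prop :=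
  Relation.ReflTransGen (fun x y => x ∈ d ∧ y ∈ d ∧ SharesEndpoint x y ∧ Cw ε y x)

/-! ### Helper lemmas -/

/-- Criterion for vanishing of `Ext¹` through the standard two-term resolution. -/
theorem extZero_iff {n : ℕ} {ε : ℕ → Bool} (A B : Rep K n ε) :
    extZero A B ↔ ∀ c : (∀ m, A.V (asrc ε m) →ₗ[K] B.V (atgt ε m)),
      ∃ h : (∀ m, A.V m →ₗ[K] B.V m), ∀ m,
        (h (atgt ε m)).comp (A.φ m) - (B.φ m).comp (h (asrc ε m)) = c m := by
  constructor
  · intro hz c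
    by_contra hcon
    apply hz
    let E : Rep K n ε :=
      { V := fun m => B.V m × A.V m
        triv := fun m hm => by
          have := A.triv m hm
          have := B.triv m hm
          infer_instance
        φ := fun m => LinearMap.prod
          ((B.φ m).comp (LinearMap.fst K _ _) + (c m).comp (LinearMap.snd K _ _))
          ((A.φ m).comp (LinearMap.snd K _ _)) }
    let f : RepHom B E :=
      { app := fun m => LinearMap.inl K (B.V m) (A.V m)
        comm := fun m => by
          ext v
          · simp [E]
          · simp [E] }
    let g : RepHom E A :=
      { app := fun m => LinearMap.snd K (B.V m) (A.V m)
        comm := fun m => by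
          apply LinearMap.ext
          rintro ⟨u, v⟩
          simp [E] }
    refine ⟨E, f, g, ⟨fun m => LinearMap.inl_injective, fun m => LinearMap.snd_surjective,
      fun m => LinearMap.range_inl K _ _⟩, ?_⟩
    rintro ⟨s, hs⟩
    apply hcon
    refine ⟨fun m => (LinearMap.fst K (B.V m) (A.V m)).comp (s.app m), fun m => ?_⟩
    apply LinearMap.ext
    intro v
    have h1 := congrArg (fun T => (T v).1) (s.comm m)
    have h2 : (s.app (asrc ε m) v).2 = v := congrArg (fun T => T v) (hs (asrc ε m))
    have h3 : (s.app (atgt ε m) (A.φ m v)).1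
        = B.φ m (s.app (asrc ε m) v).1 + c m (s.app (asrc ε m) v).2 := h1
    rw [h2] at h3
    change (s.app (atgt ε m) (A.φ m v)).1 - B.φ m (s.app (asrc ε m) v).1 = c m v
    rw [h3]; abel
  · rintro H ⟨E, f, g, ⟨hf, hg, hfg⟩, hns⟩
    apply hns
    have hsec : ∀ m, ∃ s : A.V m →ₗ[K] E.V m, (g.app m).comp s = LinearMap.id := fun m =>
      LinearMap.exists_rightInverse_of_surjective _ (LinearMap.range_eq_top.2 (hg m))
    choose s hs using hsec
    have hs' : ∀ m v, g.app m (s m v) = v := fun m v => congrArg (fun T => T v) (hs m)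
    have hret : ∀ m, ∃ r : E.V m →ₗ[K] B.V m, r.comp (f.app m) = LinearMap.id := fun m =>
      LinearMap.exists_leftInverse_of_injective _ (LinearMap.ker_eq_bot.2 (hf m))
    choose r hr using hret
    have hr' : ∀ m v, r m (f.app m v) = v := fun m v => congrArg (fun T => T v) (hr m)
    have hfr : ∀ m v, g.app m v = 0 → f.app m (r m v) = v := by
      intro m v hv
      have : v ∈ LinearMap.range (f.app m) := by rw [hfg m]; exact hv
      obtain ⟨w, rfl⟩ := this
      rw [hr']
    have hgf : ∀ m v, g.app m (f.app m v) = 0 := by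
      intro m v
      have : f.app m v ∈ LinearMap.ker (g.app m) := by rw [← hfg m]; exact ⟨v, rfl⟩
      exact this
    obtain ⟨h, hh⟩ := H (fun m => (r (atgt ε m)).comp
      ((E.φ m).comp (s (asrc ε m)) - (s (atgt ε m)).comp (A.φ m)))
    refine ⟨⟨fun m => s m + (f.app m).comp (h m), fun m => ?_⟩, fun m => ?_⟩
    · apply LinearMap.ext
      intro v
      have e1 := congrArg (fun T => f.app (atgt ε m) (T v)) (hh m)
      simp only [LinearMap.comp_apply, LinearMap.sub_apply] at e1
      have gcomm : ∀ w, g.app (atgt ε m) (E.φ m w) = A.φ m (g.app (asrc ε m) w) :=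
        fun w => congrArg (fun T => T w) (g.comm m)
      have fcomm : ∀ w, f.app (atgt ε m) (B.φ m w) = E.φ m (f.app (asrc ε m) w) :=
        fun w => congrArg (fun T => T w) (f.comm m)
      rw [hfr _ _ (by rw [map_sub, gcomm, hs', hs', sub_self]), map_sub, fcomm] at e1
      simp only [LinearMap.comp_apply, LinearMap.add_apply, map_add]
      rw [sub_eq_sub_iff_add_eq_add] at e1
      rw [add_comm, e1]
    · apply LinearMap.ext
      intro v
      simp only [LinearMap.comp_apply, LinearMap.add_apply, map_add, hs', hgf, add_zero,
        LinearMap.id_apply]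

theorem XV_zero {n i j m : ℕ} (h : ¬ (i + 1 ≤ m ∧ m ≤ j ∧ m ≤ n)) (v : XV K n i j m) :
    (v : K) = 0 := by
  have hb : XV K n i j m = ⊥ := by unfold XV; rw [if_neg h]
  exact (Submodule.mem_bot K).1 (hb.le v.2)

theorem XV_mem {n i j m : ℕ} (h : i + 1 ≤ m ∧ m ≤ j ∧ m ≤ n) (x : K) : x ∈ XV K n i j m := by
  unfold XV
  rw [if_pos h]
  trivial

/-- The map between vertex spaces given by multiplication with a scalar. -/
def sm (K : Type) [Field K] (n k l i j s t : ℕ) (x : K) : XV K n k l s →ₗ[K] XV K n i j t :=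
  if h : i + 1 ≤ t ∧ t ≤ j ∧ t ≤ n then
    LinearMap.codRestrict _ (x • (XV K n k l s).subtype) (fun _ => XV_mem h _)
  else 0

theorem sm_apply {n k l i j s t : ℕ} (h : i + 1 ≤ t ∧ t ≤ j ∧ t ≤ n) (x : K)
    (v : XV K n k l s) : (sm K n k l i j s t x v : K) = x * v := by
  unfold sm
  rw [dif_pos h]
  simp

theorem Xφ_apply {n i j m : ℕ} {ε : ℕ → Bool}
    (h : i + 1 ≤ atgt ε m ∧ atgt ε m ≤ j ∧ atgt ε m ≤ n)
    (v : XV K n i j (asrc ε m)) : (Xφ K n ε i j m v : K) = v := by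
  unfold Xφ
  rw [dif_pos h]
  rfl

/-- The scalar of a map. -/
theorem exists_scalar {n k l i j s t : ℕ} (T : XV K n k l s →ₗ[K] XV K n i j t) :
    ∃ x : K, (¬ ((k + 1 ≤ s ∧ s ≤ l ∧ s ≤ n) ∧ (i + 1 ≤ t ∧ t ≤ j ∧ t ≤ n)) → x = 0) ∧
      ∀ v, (T v : K) = x * v := by
  by_cases h : (k + 1 ≤ s ∧ s ≤ l ∧ s ≤ n) ∧ (i + 1 ≤ t ∧ t ≤ j ∧ t ≤ n)
  · refine ⟨T ⟨1, XV_mem h.1 1⟩, fun hh => absurd h hh, fun v => ?_⟩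
    have : v = (v : K) • (⟨1, XV_mem h.1 1⟩ : XV K n k l s) := by
      apply Subtype.ext; simp
    conv_lhs => rw [this, map_smul]
    simp [mul_comm]
  · refine ⟨0, fun _ => rfl, fun v => ?_⟩
    by_cases h1 : k + 1 ≤ s ∧ s ≤ l ∧ s ≤ n
    · rw [XV_zero (fun h2 => h ⟨h1, h2⟩) (T v)]; simp
    · have : v = 0 := Subtype.ext (XV_zero h1 v)
      rw [this]; simp

/-- Membership of a vertex in the support. -/
def InS (i j m : ℕ) : Prop := i + 1 ≤ m ∧ m ≤ j

/-- Arrows from support of `X_{k,l}` to support of `X_{i,j}`. -/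
def PA (ε : ℕ → Bool) (k l i j m : ℕ) : Prop := InS k l (asrc ε m) ∧ InS i j (atgt ε m)

theorem homZero_XV {n : ℕ} {ε : ℕ → Bool} {i j k l : ℕ} :
    homZero (Xrep K n ε k l) (Xrep K n ε i j) ↔
    ∀ T : (∀ m, XV K n k l m →ₗ[K] XV K n i j m),
      (∀ m v, (T (atgt ε m) (Xφ K n ε k l m v) : K) = (Xφ K n ε i j m (T (asrc ε m) v) : K)) →
      ∀ m v, (T m v : K) = 0 := by
  constructor
  · intro H T hT m v
    have h0 := H ⟨T, fun m => LinearMap.ext fun v => Subtype.ext (hT m v)⟩ m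
    exact congrArg (fun S : XV K n k l m →ₗ[K] XV K n i j m => (S v : K)) h0
  · intro H θ m
    refine LinearMap.ext fun v => Subtype.ext (H θ.app (fun m v => ?_) m v)
    exact congrArg (fun S : XV K n k l (asrc ε m) →ₗ[K] XV K n i j (atgt ε m) => (S v : K))
      (θ.comm m)

theorem extZero_XV {n : ℕ} {ε : ℕ → Bool} {i j k l : ℕ} :
    extZero (Xrep K n ε k l) (Xrep K n ε i j) ↔
    ∀ c : (∀ m, XV K n k l (asrc ε m) →ₗ[K] XV K n i j (atgt ε m)),
      ∃ T : (∀ m, XV K n k l m →ₗ[K] XV K n i j m), ∀ m v,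
      (T (atgt ε m) (Xφ K n ε k l m v) : K) - (Xφ K n ε i j m (T (asrc ε m) v) : K)
        = (c m v : K) := by
  rw [extZero_iff]
  constructor
  · intro H c
    obtain ⟨T, hT⟩ := H c
    exact ⟨T, fun m v => congrArg
      (fun S : XV K n k l (asrc ε m) →ₗ[K] XV K n i j (atgt ε m) => (S v : K)) (hT m)⟩
  · intro H c
    obtain ⟨T, hT⟩ := H c
    exact ⟨T, fun m => LinearMap.ext fun v => Subtype.ext (hT m v)⟩

theorem homZero_X {n : ℕ} {ε : ℕ → Bool} {i j k l : ℕ} (hjn : j ≤ n) (hln : l ≤ n) :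
    homZero (Xrep K n ε k l) (Xrep K n ε i j) ↔
    ∀ x : ℕ → K, (∀ m, ¬ (InS k l m ∧ InS i j m) → x m = 0) →
      (∀ m, PA ε k l i j m → x (atgt ε m) = x (asrc ε m)) → ∀ m, x m = 0 := by
  rw [homZero_XV]
  constructor
  · intro hz x hx hc m
    by_contra hne
    have hm : InS k l m ∧ InS i j m := by
      by_contra h; exact hne (hx m h)
    have h1 := hz (fun m => sm K n k l i j m m (x m)) (by
          intro m v
          by_cases ht : InS i j (atgt ε m)
          · have ht' : i + 1 ≤ atgt ε m ∧ atgt ε m ≤ j ∧ atgt ε m ≤ n :=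
              ⟨ht.1, ht.2, ht.2.trans hjn⟩
            rw [sm_apply ht', Xφ_apply ht']
            by_cases hs : InS k l (asrc ε m)
            · have e := hc m ⟨hs, ht⟩
              have l1 : x (atgt ε m) * (Xφ K n ε k l m v : K) = x (atgt ε m) * v := by
                by_cases ht2 : InS k l (atgt ε m)
                · rw [Xφ_apply ⟨ht2.1, ht2.2, ht2.2.trans hln⟩]
                · rw [hx _ (fun h => ht2 h.1)]; simp
              rw [l1, e]
              by_cases hs2 : InS i j (asrc ε m)
              · rw [sm_apply ⟨hs2.1, hs2.2, hs2.2.trans hjn⟩]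
              · rw [XV_zero (fun h => hs2 ⟨h.1, h.2.1⟩) (sm K n k l i j _ _ _ v),
                  hx _ (fun h => hs2 h.2)]; simp
            · have : v = 0 := Subtype.ext (XV_zero (fun h => hs ⟨h.1, h.2.1⟩) v)
              rw [this]; simp
          · rw [XV_zero (fun h => ht ⟨h.1, h.2.1⟩) (sm K n k l i j _ _ _ _),
              XV_zero (fun h => ht ⟨h.1, h.2.1⟩) (Xφ K n ε i j m _)]) m
      ⟨1, XV_mem ⟨hm.1.1, hm.1.2, hm.1.2.trans hln⟩ 1⟩
    rw [sm_apply ⟨hm.2.1, hm.2.2, hm.2.2.trans hjn⟩] at h1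
    simp at h1
    exact hne h1
  · intro H T hT m v
    have hx := fun m => exists_scalar (K := K) (n := n) (k := k) (l := l) (i := i) (j := j)
      (s := m) (t := m) (T m)
    choose x hx0 hx1 using hx
    have hz := H x (fun m hm => hx0 m (fun h => hm ⟨⟨h.1.1, h.1.2.1⟩, ⟨h.2.1, h.2.2.1⟩⟩)) (by
      intro m ⟨hs, ht⟩
      have hs' : k + 1 ≤ asrc ε m ∧ asrc ε m ≤ l ∧ asrc ε m ≤ n := ⟨hs.1, hs.2, hs.2.trans hln⟩
      have ht' : i + 1 ≤ atgt ε m ∧ atgt ε m ≤ j ∧ atgt ε m ≤ n := ⟨ht.1, ht.2, ht.2.trans hjn⟩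
      let v : XV K n k l (asrc ε m) := ⟨1, XV_mem hs' 1⟩
      have e := hT m v
      have e2 : x (atgt ε m) * (Xφ K n ε k l m v : K) = x (asrc ε m) * 1 := by
        rw [← hx1, e, Xφ_apply ht']
        exact hx1 _ v
      by_cases ht2 : InS k l (atgt ε m)
      · rw [Xφ_apply ⟨ht2.1, ht2.2, ht2.2.trans hln⟩] at e2
        simpa [v] using e2
      · have : x (atgt ε m) = 0 := hx0 _ (fun h => ht2 ⟨h.1.1, h.1.2.1⟩)
        rw [this] at e2 ⊢
        simpa using e2)
    rw [hx1 m v, hz m, zero_mul]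

theorem extZero_X {n : ℕ} {ε : ℕ → Bool} {i j k l : ℕ} (hjn : j ≤ n) (hln : l ≤ n) :
    extZero (Xrep K n ε k l) (Xrep K n ε i j) ↔
    ∀ c : ℕ → K, ∃ x : ℕ → K, (∀ m, ¬ (InS k l m ∧ InS i j m) → x m = 0) ∧
      (∀ m, PA ε k l i j m → x (atgt ε m) - x (asrc ε m) = c m) := by
  rw [extZero_XV]
  constructor
  · intro H c
    obtain ⟨h, hh⟩ := H (fun m => sm K n k l i j (asrc ε m) (atgt ε m) (c m))
    have hx := fun m => exists_scalar (K := K) (n := n) (k := k) (l := l) (i := i) (j := j)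
      (s := m) (t := m) (h m)
    choose x hx0 hx1 using hx
    refine ⟨x, fun m hm => hx0 m (fun h => hm ⟨⟨h.1.1, h.1.2.1⟩, ⟨h.2.1, h.2.2.1⟩⟩), ?_⟩
    intro m ⟨hs, ht⟩
    have hs' : k + 1 ≤ asrc ε m ∧ asrc ε m ≤ l ∧ asrc ε m ≤ n := ⟨hs.1, hs.2, hs.2.trans hln⟩
    have ht' : i + 1 ≤ atgt ε m ∧ atgt ε m ≤ j ∧ atgt ε m ≤ n := ⟨ht.1, ht.2, ht.2.trans hjn⟩
    let v : XV K n k l (asrc ε m) := ⟨1, XV_mem hs' 1⟩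
    have e := hh m v
    rw [sm_apply ht', Xφ_apply ht', hx1] at e
    have e1 : (h (asrc ε m) v).1 = x (asrc ε m) * 1 := hx1 _ v
    rw [e1] at e
    by_cases ht2 : InS k l (atgt ε m)
    · rw [Xφ_apply ⟨ht2.1, ht2.2, ht2.2.trans hln⟩] at e
      simpa [v] using e
    · have : x (atgt ε m) = 0 := hx0 _ (fun h => ht2 ⟨h.1.1, h.1.2.1⟩)
      rw [this] at e ⊢
      simpa [v] using e
  · intro H c
    have hc := fun m => exists_scalar (K := K) (n := n) (k := k) (l := l) (i := i) (j := j)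
      (s := asrc ε m) (t := atgt ε m) (c m)
    choose d hd0 hd1 using hc
    obtain ⟨x, hx, hxc⟩ := H d
    refine ⟨fun m => sm K n k l i j m m (x m), fun m v => ?_⟩
    simp only
    refine Eq.trans ?_ (hd1 m v).symm
    by_cases ht : InS i j (atgt ε m)
    · have ht' : i + 1 ≤ atgt ε m ∧ atgt ε m ≤ j ∧ atgt ε m ≤ n :=
        ⟨ht.1, ht.2, ht.2.trans hjn⟩
      rw [sm_apply ht', Xφ_apply ht']
      by_cases hs : InS k l (asrc ε m)
      · have e := hxc m ⟨hs, ht⟩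
        have l1 : x (atgt ε m) * (Xφ K n ε k l m v : K) = x (atgt ε m) * v := by
          by_cases ht2 : InS k l (atgt ε m)
          · rw [Xφ_apply ⟨ht2.1, ht2.2, ht2.2.trans hln⟩]
          · rw [hx _ (fun h => ht2 h.1)]; simp
        rw [l1, ← e, sub_mul]
        by_cases hs2 : InS i j (asrc ε m)
        · rw [sm_apply ⟨hs2.1, hs2.2, hs2.2.trans hjn⟩]
        · rw [XV_zero (fun h => hs2 ⟨h.1, h.2.1⟩) (sm K n k l i j _ _ _ v),
            hx (asrc ε m) (fun h => hs2 h.2)]; simp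
      · have : v = 0 := Subtype.ext (XV_zero (fun h => hs ⟨h.1, h.2.1⟩) v)
        rw [this]; simp
    · rw [XV_zero (fun h => ht ⟨h.1, h.2.1⟩) (sm K n k l i j _ _ _ _),
        XV_zero (fun h => ht ⟨h.1, h.2.1⟩) (Xφ K n ε i j m _),
        hd0 m (fun h => ht ⟨h.2.1, h.2.2.1⟩)]; simp

theorem comb_hom (P : ℕ → Prop) (a b : ℕ) (hP1 : ∀ m, P m → a ≤ m ∧ m ≤ b)
    (hP2 : ∀ m, a < m → m < b → P m) :
    (∀ x : ℕ → K, (∀ m, ¬ (a < m ∧ m ≤ b) → x m = 0) →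
      (∀ m, P m → x (m + 1) = x m) → ∀ m, x m = 0) ↔ (b ≤ a ∨ P a ∨ P b) := by
  constructor
  · intro H
    by_contra hcon
    push Not at hcon
    obtain ⟨h1, h2, h3⟩ := hcon
    have := H (fun m => if a < m ∧ m ≤ b then 1 else 0) (fun m hm => if_neg hm) (by
      intro m hm
      have := hP1 m hm
      have ha : m ≠ a := by rintro rfl; exact h2 hm
      have hb : m ≠ b := by rintro rfl; exact h3 hm
      rw [if_pos (by omega), if_pos (by omega)]) (a + 1)
    rw [if_pos (by omega)] at this
    exact one_ne_zero this
  · intro h x hx hc m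
    by_cases hm : a < m ∧ m ≤ b
    · obtain h | h | h := h
      · omega
      · have : ∀ r, a + r ≤ b → x (a + r) = 0 := by
          intro r
          induction r with
          | zero => intro _; exact hx _ (by omega)
          | succ r ih =>
            intro hr
            have hp : P (a + r) := by
              rcases Nat.eq_zero_or_pos r with rfl | h0
              · exact h
              · exact hP2 _ (by omega) (by omega)
            rw [← add_assoc, hc _ hp]
            exact ih (by omega)
        have e := this (m - a) (by omega)
        rwa [show a + (m - a) = m by omega] at e
      · have : ∀ r, a + r < b + 1 → x (b + 1 - r) = 0 := by
          intro r
          induction r with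
          | zero => intro _; exact hx _ (by omega)
          | succ r ih =>
            intro hr
            have hp : P (b + 1 - (r + 1)) := by
              rcases Nat.eq_zero_or_pos r with rfl | h0
              · exact h
              · exact hP2 _ (by omega) (by omega)
            rw [← hc _ hp, show b + 1 - (r + 1) + 1 = b + 1 - r by omega]
            exact ih (by omega)
        have e := this (b + 1 - m) (by omega)
        rwa [show b + 1 - (b + 1 - m) = m by omega] at e
    · exact hx m hm

theorem comb_ext (P : ℕ → Prop) (a b : ℕ) (hP1 : ∀ m, P m → a ≤ m ∧ m ≤ b)
    (hP2 : ∀ m, a < m → m < b → P m) :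
    (∀ c : ℕ → K, ∃ x : ℕ → K, (∀ m, ¬ (a < m ∧ m ≤ b) → x m = 0) ∧
      (∀ m, P m → x (m + 1) - x m = c m)) ↔ ¬ (P a ∧ P b) := by
  constructor
  · rintro H ⟨ha, hb⟩
    obtain ⟨x, hx, hc⟩ := H (fun m => if m = a then 1 else 0)
    have hab := (hP1 _ ha).2
    have hs : ∑ m ∈ Finset.Ico a (b + 1), (x (m + 1) - x m) = x (b + 1) - x a :=
      Finset.sum_Ico_sub x (by omega)
    rw [hx (b + 1) (by omega), hx a (by omega)] at hs
    rw [Finset.sum_congr rfl (fun m hm => hc m (by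
      rw [Finset.mem_Ico] at hm
      by_cases h1 : m = a
      · rwa [h1]
      by_cases h2 : m = b
      · rwa [h2]
      exact hP2 m (by omega) (by omega)))] at hs
    rw [Finset.sum_ite_eq' , if_pos (Finset.mem_Ico.2 ⟨le_rfl, by omega⟩)] at hs
    simp at hs
  · intro h c
    by_cases hb : P b
    · have ha : ¬ P a := fun ha => h ⟨ha, hb⟩
      refine ⟨fun m => if a < m ∧ m ≤ b then - ∑ r ∈ Finset.Ico m (b + 1), c r else 0,
        fun m hm => if_neg hm, fun m hm => ?_⟩
      have := hP1 m hm
      have hne : m ≠ a := by rintro rfl; exact ha hm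
      simp only
      rw [if_pos (show a < m ∧ m ≤ b by omega),
        Finset.sum_eq_sum_Ico_succ_bot (show m < b + 1 by omega)]
      by_cases hmb : m = b
      · subst hmb
        rw [if_neg (by omega)]; simp
      · rw [if_pos (by omega)]; ring
    · refine ⟨fun m => if a < m ∧ m ≤ b then ∑ r ∈ Finset.Ico a m, c r else 0,
        fun m hm => if_neg hm, fun m hm => ?_⟩
      have := hP1 m hm
      have hne : m ≠ b := by rintro rfl; exact hb hm
      simp only
      rw [if_pos (show a < m + 1 ∧ m + 1 ≤ b by omega), Finset.sum_Ico_succ_top (by omega)]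
      by_cases hma : m = a
      · subst hma
        rw [if_neg (by omega)]; simp
      · rw [if_pos (by omega)]; ring

theorem PA_true {ε : ℕ → Bool} {m : ℕ} (h : ε m = true) (k l i j : ℕ) :
    PA ε k l i j m ↔ (k + 1 ≤ m ∧ m ≤ l) ∧ (i + 1 ≤ m + 1 ∧ m + 1 ≤ j) := by
  simp [PA, InS, asrc, atgt, h]

theorem PA_false {ε : ℕ → Bool} {m : ℕ} (h : ε m = false) (k l i j : ℕ) :
    PA ε k l i j m ↔ (k + 1 ≤ m + 1 ∧ m + 1 ≤ l) ∧ (i + 1 ≤ m ∧ m ≤ j) := by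
  simp [PA, InS, asrc, atgt, h]

theorem exc_iff {n : ℕ} {ε : ℕ → Bool} {i j k l : ℕ} (hjn : j ≤ n) (hln : l ≤ n) :
    ExcPair (Xrep K n ε i j) (Xrep K n ε k l) ↔
      (min j l ≤ max i k ∨ PA ε k l i j (max i k) ∨ PA ε k l i j (min j l)) ∧
      ¬ (PA ε k l i j (max i k) ∧ PA ε k l i j (min j l)) := by
  have hsup : ∀ m, (InS k l m ∧ InS i j m) ↔ (max i k < m ∧ m ≤ min j l) := by
    intro m; unfold InS; omega
  have hP1 : ∀ m, PA ε k l i j m → max i k ≤ m ∧ m ≤ min j l := by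
    intro m hm
    cases h : ε m
    · rw [PA_false h] at hm; omega
    · rw [PA_true h] at hm; omega
  have hP2 : ∀ m, max i k < m → m < min j l → PA ε k l i j m := by
    intro m h1 h2
    cases h : ε m
    · rw [PA_false h]; omega
    · rw [PA_true h]; omega
  unfold ExcPair
  rw [homZero_X hjn hln, extZero_X hjn hln, ← comb_hom (K := K) _ _ _ hP1 hP2,
    ← comb_ext (K := K) _ _ _ hP1 hP2]
  simp only [hsup]
  have hs : ∀ (x : ℕ → K) m, x (atgt ε m) = x (asrc ε m) ↔ x (m + 1) = x m := by
    intro x m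
    cases h : ε m
    · simp only [asrc, atgt, h]; exact eq_comm
    · simp [asrc, atgt, h]
  refine and_congr ?_ ?_
  · simp only [hs]
  · constructor
    · intro H c
      obtain ⟨x, hx, hc⟩ := H (fun m => if ε m then c m else - c m)
      refine ⟨x, hx, fun m hm => ?_⟩
      have := hc m hm
      cases h : ε m
      · simp [asrc, atgt, h] at this
        rw [← neg_eq_iff_eq_neg] at this
        rw [← this]; ring
      · simpa [asrc, atgt, h] using this
    · intro H c
      obtain ⟨x, hx, hc⟩ := H (fun m => if ε m then c m else - c m)
      refine ⟨x, hx, fun m hm => ?_⟩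
      have := hc m hm
      cases h : ε m
      · simp [h] at this
        rw [← neg_eq_iff_eq_neg] at this
        simp [asrc, atgt, h]
        rw [← this]; ring
      · simpa [asrc, atgt, h] using this

/-- Lemma 3.5 b): `(U,V)` exceptional and `(V,U)` not exceptional iff the strand of `U`
is clockwise from the strand of `V`. -/
theorem exceptional_one_way_iff_clockwise (K : Type) [Field K] (n : ℕ) (ε : ℕ → Bool)
    (i j k l : ℕ) (hij : i < j) (hjn : j ≤ n) (hkl : k < l) (hln : l ≤ n)
    (hne : ¬(i = k ∧ j = l)) :
    (ExcPair (Xrep K n ε i j) (Xrep K n ε k l) ∧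
     ¬ ExcPair (Xrep K n ε k l) (Xrep K n ε i j)) ↔
      (SharesEndpoint (i, j) (k, l) ∧ Cw ε (i, j) (k, l)) := by
  rw [exc_iff hjn hln, exc_iff hln hjn]
  rw [max_comm k i, min_comm l j]
  simp only [SharesEndpoint, Cw]
  have T := fun (m : ℕ) (h : ε m = true) => And.intro (PA_true h k l i j) (PA_true h i j k l)
  have F := fun (m : ℕ) (h : ε m = false) => And.intro (PA_false h k l i j) (PA_false h i j k l)
  obtain ⟨a, ha⟩ : ∃ a, a = max i k := ⟨_, rfl⟩
  obtain ⟨b, hb⟩ : ∃ b, b = min j l := ⟨_, rfl⟩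
  rw [← ha, ← hb]
  have hab : (a = i ∧ k ≤ i) ∨ (a = k ∧ i < k) := by omega
  have hbb : (b = j ∧ j ≤ l) ∨ (b = l ∧ l < j) := by omega
  clear ha hb
  rcases hab with ⟨rfl, h1⟩ | ⟨rfl, h1⟩ <;> rcases hbb with ⟨rfl, h2⟩ | ⟨rfl, h2⟩ <;>
  rcases hea : ε a with _ | _ <;> rcases heb : ε b with _ | _ <;>
  first
  | (rw [(F a hea).1, (F a hea).2, (F b heb).1, (F b heb).2])
  | (rw [(F a hea).1, (F a hea).2, (T b heb).1, (T b heb).2])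
  | (rw [(T a hea).1, (T a hea).2, (F b heb).1, (F b heb).2])
  | (rw [(T a hea).1, (T a hea).2, (T b heb).1, (T b heb).2])
  all_goals clear T F
  all_goals grind

end ESPaper
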